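/- arXiv:2410.00853 — 2 statements merged into one kernel-verified Lean document; each statement's English description precedes it below -/
import Mathlib

section
/- Let X and Y be topological spaces and let η : X → Y and ρ : Y → X be continuous maps such that ρ ∘ η = id_X and η(ρ(y)) ∈ closure({y}) for every y ∈ Y. Then ρ is a closed map, and moreover for every y ∈ Y one has closure({ρ(y)}) = η⁻¹(closure({y})); in particular ρ(y) is a generic point of the closed set η⁻¹(closure({y})). -/
set_option autoImplicit false

namespace NCTTG

/-- Object-level skeleton of a big (rigidly-compactly-generated, not necessarily
braided) monoidal triangulated category `K`: objects, an isomorphism relation,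
zero and unit objects, tensor product, shift, biproducts, set-indexed
coproducts, distinguished triangles (recorded as the predicate `Tri A B C`,
meaning that there is a distinguished triangle `A ⟶ B ⟶ C ⟶ ΣA`), vanishing of
Hom-groups, and the class of compact objects (the compact part `K^c`, which is
a rigid tensor subcategory containing the unit). -/
structure BigMTC where
  Obj : Type
  Iso : Obj → Obj → Prop
  iso_refl : ∀ A, Iso A A
  iso_symm : ∀ {A B}, Iso A B → Iso B A
  iso_trans : ∀ {A B C}, Iso A B → Iso B C → Iso A C
  zero : Obj
  one : Obj
  tensor : Obj → Obj → Obj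
  shift : Obj → Obj
  shiftInv : Obj → Obj
  biprod : Obj → Obj → Obj
  coprod : ∀ {ι : Type}, (ι → Obj) → Obj
  Tri : Obj → Obj → Obj → Prop
  HomZero : Obj → Obj → Prop
  Compact : Obj → Prop
  tensor_congr : ∀ {A A' B B'}, Iso A A' → Iso B B' → Iso (tensor A B) (tensor A' B')
  tensor_one : ∀ A, Iso (tensor A one) A
  one_tensor : ∀ A, Iso (tensor one A) A
  tensor_assoc : ∀ A B C, Iso (tensor (tensor A B) C) (tensor A (tensor B C))
  tensor_zero : ∀ A, Iso (tensor A zero) zero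
  zero_tensor : ∀ A, Iso (tensor zero A) zero
  tensor_coprod : ∀ {ι : Type} (A : Obj) (f : ι → Obj),
    Iso (tensor A (coprod f)) (coprod fun i => tensor A (f i))
  coprod_tensor : ∀ {ι : Type} (A : Obj) (f : ι → Obj),
    Iso (tensor (coprod f) A) (coprod fun i => tensor (f i) A)
  shift_congr : ∀ {A B}, Iso A B → Iso (shift A) (shift B)
  shift_shiftInv : ∀ A, Iso (shift (shiftInv A)) A
  shiftInv_shift : ∀ A, Iso (shiftInv (shift A)) A
  shift_tensor : ∀ A B, Iso (shift (tensor A B)) (tensor (shift A) B)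
  biprod_congr : ∀ {A A' B B'}, Iso A A' → Iso B B' → Iso (biprod A B) (biprod A' B')
  biprod_zero : ∀ A, Iso (biprod A zero) A
  tri_congr : ∀ {A A' B B' C C'}, Iso A A' → Iso B B' → Iso C C' → Tri A B C → Tri A' B' C'
  tri_id : ∀ A, Tri A A zero
  tri_rot : ∀ {A B C}, Tri A B C → Tri B C (shift A)
  tri_biprod : ∀ A B, Tri A (biprod A B) B
  tri_tensor_left : ∀ {A B C} (D : Obj), Tri A B C → Tri (tensor D A) (tensor D B) (tensor D C)
  tri_tensor_right : ∀ {A B C} (D : Obj), Tri A B C → Tri (tensor A D) (tensor B D) (tensor C D)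
  compact_zero : Compact zero
  compact_one : Compact one
  compact_iso : ∀ {A B}, Iso A B → Compact A → Compact B
  compact_shift : ∀ {A}, Compact A → Compact (shift A)
  compact_shiftInv : ∀ {A}, Compact A → Compact (shiftInv A)
  compact_tensor : ∀ {A B}, Compact A → Compact B → Compact (tensor A B)
  compact_biprod : ∀ {A B}, Compact A → Compact B → Compact (biprod A B)

/-- A thick (two-sided tensor) ideal of the compact part `K^c` of `T`. -/
structure ThickIdeal (T : BigMTC) where
  carrier : Set T.Obj
  subset_compact : ∀ A ∈ carrier, T.Compact A
  zero_mem : T.zero ∈ carrier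
  iso_closed : ∀ {A B}, T.Iso A B → A ∈ carrier → B ∈ carrier
  shift_mem : ∀ {A}, A ∈ carrier → T.shift A ∈ carrier
  shiftInv_mem : ∀ {A}, A ∈ carrier → T.shiftInv A ∈ carrier
  ext_closed : ∀ {A B C}, T.Tri A B C → A ∈ carrier → C ∈ carrier → T.Compact B → B ∈ carrier
  summand_closed : ∀ {A B}, T.Compact A → T.Compact B → T.biprod A B ∈ carrier → A ∈ carrier
  tensor_left_mem : ∀ {A} (B : T.Obj), T.Compact B → A ∈ carrier → T.tensor B A ∈ carrier
  tensor_right_mem : ∀ {A} (B : T.Obj), T.Compact B → A ∈ carrier → T.tensor A B ∈ carrier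

/-- A prime thick ideal of `K^c`: a proper thick ideal `P` such that
`I ⊗ J ⊆ P` implies `I ⊆ P` or `J ⊆ P` for all thick ideals `I, J`.
These are the points of the Balmer spectrum `Spc K^c`. -/
structure PrimeIdeal (T : BigMTC) extends ThickIdeal T where
  proper : ∃ A, T.Compact A ∧ A ∉ carrier
  isPrime : ∀ I J : ThickIdeal T,
    (∀ A ∈ I.carrier, ∀ B ∈ J.carrier, T.tensor A B ∈ carrier) →
    I.carrier ⊆ carrier ∨ J.carrier ⊆ carrier

/-- The (noncommutative) Balmer support `supp^B(A) = {P ∈ Spc K^c : A ∉ P}`. -/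
def suppB (T : BigMTC) (A : T.Obj) : Set (PrimeIdeal T) := {P | A ∉ P.carrier}

/-- The topology of the Balmer spectrum: the closed sets are generated by the
supports `supp^B(S) = {P : P ∩ S = ∅}` of arbitrary families `S` of objects. -/
instance spcTopology (T : BigMTC) : TopologicalSpace (PrimeIdeal T) :=
  TopologicalSpace.generateFrom
    {U | ∃ S : Set T.Obj, U = {P : PrimeIdeal T | ∃ A ∈ S, A ∈ P.carrier}}

/-- `Φ_{supp^B}(I) = ⋃_{A ∈ I} supp^B(A)`. -/
def PhiB (T : BigMTC) (I : ThickIdeal T) : Set (PrimeIdeal T) :=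
  ⋃ A ∈ I.carrier, suppB T A

/-- `D` is (the object class of) a thick subcategory of the compact part `K^c`. -/
def IsThickSubcat (T : BigMTC) (D : Set T.Obj) : Prop :=
  (∀ A ∈ D, T.Compact A) ∧ T.zero ∈ D ∧
  (∀ A B, T.Iso A B → A ∈ D → B ∈ D) ∧
  (∀ A, A ∈ D → T.shift A ∈ D) ∧ (∀ A, A ∈ D → T.shiftInv A ∈ D) ∧
  (∀ A B C, T.Tri A B C → A ∈ D → C ∈ D → T.Compact B → B ∈ D) ∧
  (∀ A B, T.Compact A → T.Compact B → T.biprod A B ∈ D → A ∈ D)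

/-- `K^c` is finitely generated: it has a thick generator, i.e. a compact object
`G` such that the smallest thick subcategory of `K^c` containing `G` is all of `K^c`. -/
def FinitelyGenerated (T : BigMTC) : Prop :=
  ∃ G, T.Compact G ∧
    ∀ D : Set T.Obj, IsThickSubcat T D → G ∈ D → ∀ A, T.Compact A → A ∈ D

/-- `S` is the carrier of a thick ideal of `K^c`. -/
def IsThickIdealSet (T : BigMTC) (S : Set T.Obj) : Prop :=
  ∃ I : ThickIdeal T, I.carrier = S

/-- The thick ideal `⟨S⟩` of `K^c` generated by a collection `S` of compact objects. -/
def thickIdealGen (T : BigMTC) (S : Set T.Obj) : Set T.Obj :=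
  ⋂₀ {C | IsThickIdealSet T C ∧ S ⊆ C}

/-- `D` is (the object class of) a localizing subcategory of `K`. -/
def IsLocalizing (T : BigMTC) (D : Set T.Obj) : Prop :=
  T.zero ∈ D ∧
  (∀ A B, T.Iso A B → A ∈ D → B ∈ D) ∧
  (∀ A, A ∈ D → T.shift A ∈ D) ∧ (∀ A, A ∈ D → T.shiftInv A ∈ D) ∧
  (∀ A B, T.biprod A B ∈ D → A ∈ D) ∧
  (∀ A B C, T.Tri A B C → A ∈ D → C ∈ D → B ∈ D) ∧
  (∀ (ι : Type) (f : ι → T.Obj), (∀ i, f i ∈ D) → T.coprod f ∈ D)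

/-- `Loc(S)`: the smallest localizing subcategory of `K` containing `S`. -/
def Loc (T : BigMTC) (S : Set T.Obj) : Set T.Obj :=
  ⋂₀ {D | IsLocalizing T D ∧ S ⊆ D}

/-- `D` is a localizing tensor ideal of `K`. -/
def IsLocTensorIdeal (T : BigMTC) (D : Set T.Obj) : Prop :=
  IsLocalizing T D ∧ ∀ A ∈ D, ∀ B, T.tensor A B ∈ D ∧ T.tensor B A ∈ D

/-- `Loc^⊗(S)`: the smallest localizing tensor ideal of `K` containing `S`. -/
def LocTensor (T : BigMTC) (S : Set T.Obj) : Set T.Obj :=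
  ⋂₀ {D | IsLocTensorIdeal T D ∧ S ⊆ D}

/-- The right orthogonal `S^⊥ = {B : Hom(A, B) = 0 for all A ∈ S}`. -/
def Perp (T : BigMTC) (S : Set T.Obj) : Set T.Obj :=
  {B | ∀ A ∈ S, T.HomZero A B}

/-- A choice of Rickard idempotents for `T`: for each thick ideal `I` of `K^c`
(given by its carrier set), objects `Γ_I 1 = Gam I` and `L_I 1 = Lf I` fitting
into a distinguished triangle `Γ_I 1 → 1 → L_I 1 → ΣΓ_I 1` with
`Γ_I 1 ∈ Loc(I)` and `L_I 1 ∈ Loc(I)^⊥`.  (By `Γ_I A ≅ Γ_I 1 ⊗ A` and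
`L_I A ≅ L_I 1 ⊗ A`, these objects determine the Rickard idempotent functors.) -/
structure RickardData (T : BigMTC) where
  Gam : Set T.Obj → T.Obj
  Lf : Set T.Obj → T.Obj
  tri : ∀ S : Set T.Obj, IsThickIdealSet T S → T.Tri (Gam S) T.one (Lf S)
  gam_mem : ∀ S : Set T.Obj, IsThickIdealSet T S → Gam S ∈ Loc T S
  lf_mem : ∀ S : Set T.Obj, IsThickIdealSet T S → Lf S ∈ Perp T (Loc T S)

/-- A support datum `(X, σ)` on the compact part `K^c` of `T`, with values in
the closed subsets of a `T₀` topological space `X`. -/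
structure SupportDatum (T : BigMTC) (X : Type*) [TopologicalSpace X] [T0Space X] where
  σ : T.Obj → Set X
  isClosed : ∀ {A}, T.Compact A → IsClosed (σ A)
  iso_congr : ∀ {A B}, T.Iso A B → σ A = σ B
  one_eq : σ T.one = Set.univ
  zero_eq : σ T.zero = ∅
  biprod_eq : ∀ {A B}, T.Compact A → T.Compact B → σ (T.biprod A B) = σ A ∪ σ B
  shift_eq : ∀ {A}, T.Compact A → σ (T.shift A) = σ A
  tri_subset : ∀ {A B C}, T.Compact A → T.Compact B → T.Compact C →
    T.Tri A B C → σ A ⊆ σ B ∪ σ C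
  tensor_subset : ∀ {A B}, T.Compact A → T.Compact B → σ (T.tensor A B) ⊆ σ A ∩ σ B

/-- A support datum is tensorial if
`⋃_{B ∈ K^c} σ(A ⊗ B ⊗ C) = σ(A) ∩ σ(C)` for all compact `A, C`. -/
def Tensorial {X : Type*} [TopologicalSpace X] [T0Space X]
    (T : BigMTC) (s : SupportDatum T X) : Prop :=
  ∀ A C, T.Compact A → T.Compact C →
    (⋃ B ∈ {B : T.Obj | T.Compact B}, s.σ (T.tensor (T.tensor A B) C)) = s.σ A ∩ s.σ C

/-- A support datum is faithful if `σ(A) = ∅` implies `A ≅ 0`. -/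
def Faithful {X : Type*} [TopologicalSpace X] [T0Space X]
    (T : BigMTC) (s : SupportDatum T X) : Prop :=
  ∀ A, T.Compact A → s.σ A = ∅ → T.Iso A T.zero

/-- A support datum is realizing if every closed subset of `X` is the support
of some compact object. -/
def Realizing {X : Type*} [TopologicalSpace X] [T0Space X]
    (T : BigMTC) (s : SupportDatum T X) : Prop :=
  ∀ V : Set X, IsClosed V → ∃ A, T.Compact A ∧ s.σ A = V

/-- `η : X → Spc K^c` is the universal map of a (tensorial) support datum:
the continuous map satisfying `σ(A) = η⁻¹(supp^B(A))` for all compact `A`. -/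
def IsUniversalMap {X : Type*} [TopologicalSpace X] [T0Space X]
    (T : BigMTC) (s : SupportDatum T X) (η : X → PrimeIdeal T) : Prop :=
  Continuous η ∧ ∀ A, T.Compact A → s.σ A = η ⁻¹' suppB T A

/-- `ρ` is a comparison map for the support datum `s` with universal map `η`:
a continuous left inverse of `η` such that `η(ρ(P)) ⊆ P` for all `P ∈ Spc K^c`. -/
def IsComparison {X : Type*} [TopologicalSpace X] [T0Space X]
    (T : BigMTC) (s : SupportDatum T X) (η : X → PrimeIdeal T)
    (ρ : PrimeIdeal T → X) : Prop :=
  Continuous ρ ∧ (∀ x, ρ (η x) = x) ∧ ∀ P, (η (ρ P)).carrier ⊆ P.carrier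

/-- `Θ(S)`: the compact objects whose support is contained in `S ⊆ X`. -/
def Theta {X : Type*} (T : BigMTC) (σ : T.Obj → Set X) (S : Set X) : Set T.Obj :=
  {A | T.Compact A ∧ σ A ⊆ S}

/-- `Γ_S 1 := Γ_{Θ(S)} 1` for a subset `S ⊆ X`. -/
def gammaSet {X : Type*} (T : BigMTC) (R : RickardData T)
    (σ : T.Obj → Set X) (S : Set X) : T.Obj :=
  R.Gam (Theta T σ S)

/-- `L_S 1 := L_{Θ(S)} 1` for a subset `S ⊆ X`. -/
def lSet {X : Type*} (T : BigMTC) (R : RickardData T)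
    (σ : T.Obj → Set X) (S : Set X) : T.Obj :=
  R.Lf (Theta T σ S)

/-- `Γ_x 1 := Γ_{V(x)} 1 ⊗ L_{Z(x)} 1`, where `V(x)` is the closure of `{x}`
and `Z(x) = {y : x ∉ closure {y}}`. -/
def gammaPt {X : Type*} [TopologicalSpace X] (T : BigMTC) (R : RickardData T)
    (σ : T.Obj → Set X) (x : X) : T.Obj :=
  T.tensor (gammaSet T R σ (closure {x})) (lSet T R σ {y | x ∉ closure {y}})

/-- The extension `σ̃(A) = {x ∈ X : Γ_x 1 ⊗ A ≠ 0}` of a support datum to all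
of `K`. -/
def extSupp {X : Type*} [TopologicalSpace X] (T : BigMTC) (R : RickardData T)
    (σ : T.Obj → Set X) (A : T.Obj) : Set X :=
  {x | ¬ T.Iso (T.tensor (gammaPt T R σ x) A) T.zero}

end NCTTG

namespace NCTTG

/-- If `η : X → Y` and `ρ : Y → X` are continuous maps with
`ρ ∘ η = id_X` and `η(ρ(y)) ∈ closure {y}` for every `y`, then `ρ` is a closed
map, `closure {ρ(y)} = η⁻¹(closure {y})` for every `y`, and in particular
`ρ(y)` is a generic point of the closed set `η⁻¹(closure {y})`. -/
theorem comparison_map_closed_and_generic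
    {X Y : Type*} [TopologicalSpace X] [TopologicalSpace Y]
    (η : X → Y) (ρ : Y → X) (hη : Continuous η) (hρ : Continuous ρ)
    (hretr : ∀ x, ρ (η x) = x) (hspec : ∀ y, η (ρ y) ∈ closure {y}) :
    IsClosedMap ρ ∧
    (∀ y, closure {ρ y} = η ⁻¹' closure {y}) ∧
    (∀ y, ρ y ∈ η ⁻¹' closure {y}) := by
  refine ⟨fun C hC => ?_, fun y => ?_, hspec⟩
  · -- The image of a closed set `C` under `ρ` is the closed set `η ⁻¹' C`.
    have himage : ρ '' C = η ⁻¹' C := by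
      apply Set.Subset.antisymm
      · rintro _ ⟨y, hy, rfl⟩
        exact closure_minimal (Set.singleton_subset_iff.2 hy) hC (hspec y)
      · exact fun x hx => ⟨η x, hx, hretr x⟩
    rw [himage]
    exact hC.preimage hη
  · apply Set.Subset.antisymm
    · exact closure_minimal (Set.singleton_subset_iff.2 (hspec y)) (isClosed_closure.preimage hη)
    · intro x hx
      -- Continuity of `ρ` carries the specialization `y ⤳ η x` to `ρ y ⤳ ρ (η x) = x`.
      have hspecializes : ρ y ⤳ ρ (η x) := (specializes_iff_mem_closure.2 hx).map hρ
      rw [hretr] at hspecializes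
      exact hspecializes.mem_closure

end NCTTG
end

section
/- Let X and Y be topological spaces and let η : X → Y and ρ : Y → X be continuous maps such that ρ ∘ η = id_X and η(ρ(y)) ∈ closure({y}) for every y ∈ Y. Then for every quasicompact open subset U ⊆ X, the preimage ρ⁻¹(U) is quasicompact. Consequently, if V ⊆ X is Thomason-closed, then ρ⁻¹(V) is Thomason-closed in Y. -/
set_option autoImplicit false

namespace NCTTG

/-- A subset is Thomason-closed if it is a union of closed sets each of which
has quasicompact complement. -/
def IsThomasonClosed {X : Type*} [TopologicalSpace X] (V : Set X) : Prop :=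
  ∃ 𝒱 : Set (Set X), (∀ W ∈ 𝒱, IsClosed W ∧ IsCompact Wᶜ) ∧ V = ⋃₀ 𝒱

/-- The image `η '' U` is quasicompact and contained in `ρ ⁻¹' U`. Every `y` in `ρ ⁻¹' U` has a
specialization `η (ρ y)` in `η '' U`, so any open set containing the latter contains `y`; hence a
finite subfamily covering `η '' U` already covers `ρ ⁻¹' U`. -/
lemma isCompact_preimage_of_specializing_section
    {X Y : Type*} [TopologicalSpace X] [TopologicalSpace Y]
    {η : X → Y} {ρ : Y → X} (hη : Continuous η)
    (hretr : ∀ x, ρ (η x) = x) (hspec : ∀ y, η (ρ y) ∈ closure {y})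
    {U : Set X} (hU : IsCompact U) : IsCompact (ρ ⁻¹' U) := by
  refine isCompact_of_finite_subcover fun O hO hcov => ?_
  have hsub : η '' U ⊆ ρ ⁻¹' U := by
    rintro _ ⟨x, hx, rfl⟩
    simpa [hretr x] using hx
  obtain ⟨t, ht⟩ := (hU.image hη).elim_finite_subcover O hO (hsub.trans hcov)
  refine ⟨t, fun y hy => ?_⟩
  obtain ⟨i, hi, hyi⟩ := Set.mem_iUnion₂.1 (ht ⟨ρ y, hy, rfl⟩)
  exact Set.mem_iUnion₂.2
    ⟨i, hi, (specializes_iff_mem_closure.2 (hspec y)).mem_open (hO i) hyi⟩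

/-- If `η : X → Y` and `ρ : Y → X` are continuous maps with
`ρ ∘ η = id_X` and `η(ρ(y)) ∈ closure {y}` for every `y`, then the `ρ`-preimage
of every quasicompact open subset of `X` is quasicompact, and consequently the
`ρ`-preimage of every Thomason-closed subset of `X` is Thomason-closed. -/
theorem comparison_map_preimage_quasicompact_thomason
    {X Y : Type*} [TopologicalSpace X] [TopologicalSpace Y]
    (η : X → Y) (ρ : Y → X) (hη : Continuous η) (hρ : Continuous ρ)
    (hretr : ∀ x, ρ (η x) = x) (hspec : ∀ y, η (ρ y) ∈ closure {y}) :
    (∀ U : Set X, IsOpen U → IsCompact U → IsCompact (ρ ⁻¹' U)) ∧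
    (∀ V : Set X, IsThomasonClosed V → IsThomasonClosed (ρ ⁻¹' V)) := by
  refine ⟨fun U _ hU => isCompact_preimage_of_specializing_section hη hretr hspec hU, ?_⟩
  rintro _ ⟨𝒱, h𝒱, rfl⟩
  refine ⟨(fun W => ρ ⁻¹' W) '' 𝒱, ?_, by rw [Set.preimage_sUnion, Set.sUnion_image]⟩
  rintro _ ⟨W, hW, rfl⟩
  exact ⟨(h𝒱 W hW).1.preimage hρ,
    isCompact_preimage_of_specializing_section hη hretr hspec (h𝒱 W hW).2⟩

end NCTTG
end
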